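/- Let K ≥ 1, α > 0, and take step sizes α_k = α/√k for all k ≥ 1. Define weights w_k = ∑_{j=k}^{K} α_j β₁^{j−k} and the averaged iterate x̄^(K) = (∑_{k=1}^{K} w_k x^(k)) / (∑_{k=1}^{K} w_k). Then E[F(x̄^(K))] − F* ≤ ( n·D∞²·G∞ + (α²(1 + log K)/(1−β₁)²)·G₁/√(1−β₂) ) / ( 4α·(√(K+1) − 1)·(1−β₁) ). -/

import Mathlib

open MeasureTheory Finset

/-!
The first moment is an exponential moving average `m` of the gradients, so
`(1 - β₁) g k = m k - β₁ m (k - 1)`, and the weights satisfy `w k = α k + β₁ w (k + 1)`. Summation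
by parts therefore turns `∑ (1 - β₁) w k ⟪g k, x k - y⟫` into
`∑ (w k ⟪m k, x k - x (k + 1)⟫ + α k ⟪m k, x (k + 1) - y⟫)`. The optimality condition of the step
bounds the second term by a telescoping difference of squared distances in the metric `√v̂`, up to a
quadratic term in `x k - x (k + 1)` that Young's inequality trades against the first one. Young's
inequality costs `w k ^ 2 * m k ^ 2 / √(v̂ k)`, which is linear in the gradients: coordinatewise,
the moving average of `|g|` bounds one factor `|m|`, and `√v̂ / √(1 - β₂)` bounds the other.

Taking expectations, the subgradient property and Jensen's inequality bound the gap from above by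
the regret; the cost of the weights is `∑ w k ^ 2 ≤ ∑ α k ^ 2 / (1 - β₁) ^ 2` for any step sizes.
-/

section Sums

lemma sum_Icc_one_sub (f : ℕ → ℝ) (K : ℕ) :
    ∑ k ∈ Icc 1 K, (f (k + 1) - f k) = f (K + 1) - f 1 := by
  rcases K.eq_zero_or_pos with rfl | hK
  · simp
  · exact sum_Icc_sub hK f

lemma sum_mul_sub_succ_le {s e : ℕ → ℝ} {B : ℝ} (hs : Monotone s) (hs0 : 0 ≤ s 0)
    (he0 : ∀ k, 1 ≤ k → 0 ≤ e k) (heB : ∀ k, 1 ≤ k → e k ≤ B) (K : ℕ) :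
    ∑ k ∈ Icc 1 K, s k * (e k - e (k + 1)) ≤ s K * B := by
  have hs_nonneg (k : ℕ) : 0 ≤ s k := hs0.trans (hs k.zero_le)
  suffices h : ∑ k ∈ Icc 1 K, s k * (e k - e (k + 1)) ≤ s K * (B - e (K + 1)) by
    linarith [mul_nonneg (hs_nonneg K) (he0 (K + 1) K.succ_pos)]
  induction K with
  | zero => simpa using mul_nonneg hs0 (sub_nonneg.2 (heB 1 le_rfl))
  | succ K ih =>
    have hstep : s K * (B - e (K + 1)) ≤ s (K + 1) * (B - e (K + 1)) :=
      mul_le_mul_of_nonneg_right (hs K.le_succ) (sub_nonneg.2 (heB _ K.succ_pos))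
    rw [sum_Icc_succ_top K.succ_pos]
    linarith

lemma two_mul_sqrt_succ_sub_one_le_sum_one_div_sqrt (K : ℕ) :
    2 * (√(K + 1) - 1) ≤ ∑ k ∈ Icc 1 K, 1 / √k := by
  have hterm (k : ℕ) (hk : k ∈ Icc 1 K) : 2 * √((k + 1 : ℕ) : ℝ) - 2 * √k ≤ 1 / √k := by
    have hpos : 0 < √(k : ℝ) := Real.sqrt_pos.2 (by exact_mod_cast (mem_Icc.1 hk).1)
    have hsq : √(k : ℝ) ^ 2 = k := Real.sq_sqrt k.cast_nonneg
    have hsq' : √((k + 1 : ℕ) : ℝ) ^ 2 = k + 1 := by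
      rw [Real.sq_sqrt (by positivity), Nat.cast_succ]
    rw [le_div_iff₀ hpos]
    nlinarith [sq_nonneg (√((k + 1 : ℕ) : ℝ) - √k)]
  calc 2 * (√(K + 1) - 1)
      = ∑ k ∈ Icc 1 K, (2 * √((k + 1 : ℕ) : ℝ) - 2 * √k) := by
        rw [sum_Icc_one_sub (fun k ↦ 2 * √(k : ℝ))]
        push_cast
        rw [Real.sqrt_one]
        ring
    _ ≤ ∑ k ∈ Icc 1 K, 1 / √k := sum_le_sum hterm

lemma le_sum_of_eq_div_sqrt {a : ℕ → ℝ} {α : ℝ} (hα : 0 ≤ α)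
    (ha : ∀ k, 1 ≤ k → a k = α / √k) (K : ℕ) :
    2 * α * (√(K + 1) - 1) ≤ ∑ k ∈ Icc 1 K, a k :=
  calc 2 * α * (√(K + 1) - 1) = α * (2 * (√(K + 1) - 1)) := by ring
    _ ≤ α * ∑ k ∈ Icc 1 K, 1 / √k := by
        gcongr
        exact two_mul_sqrt_succ_sub_one_le_sum_one_div_sqrt K
    _ = ∑ k ∈ Icc 1 K, a k := by
        rw [mul_sum]
        refine sum_congr rfl fun k hk ↦ ?_
        rw [ha k (mem_Icc.1 hk).1, mul_one_div]

lemma sum_sq_le_of_eq_div_sqrt {a : ℕ → ℝ} {α : ℝ} (ha : ∀ k, 1 ≤ k → a k = α / √k) (K : ℕ) :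
    ∑ k ∈ Icc 1 K, a k ^ 2 ≤ α ^ 2 * (1 + Real.log K) :=
  calc ∑ k ∈ Icc 1 K, a k ^ 2 = ∑ k ∈ Icc 1 K, α ^ 2 * (k : ℝ)⁻¹ := by
        refine sum_congr rfl fun k hk ↦ ?_
        rw [ha k (mem_Icc.1 hk).1, div_pow, Real.sq_sqrt k.cast_nonneg, div_eq_mul_inv]
    _ = α ^ 2 * (harmonic K : ℝ) := by
        rw [← mul_sum, harmonic_eq_sum_Icc]
        push_cast
        rfl
    _ ≤ α ^ 2 * (1 + Real.log K) := by
        gcongr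
        exact harmonic_le_one_add_log K

end Sums

/-- The weight of the `k`-th iterate in the average: the step sizes from `k` up to the horizon `K`,
discounted by the momentum parameter `β`. -/
noncomputable def stepWeight (a : ℕ → ℝ) (β : ℝ) (K k : ℕ) : ℝ :=
  ∑ j ∈ Icc k K, a j * β ^ (j - k)

section StepWeight

variable {a : ℕ → ℝ} {β : ℝ} {K k : ℕ}

lemma stepWeight_eq_add (a : ℕ → ℝ) (β : ℝ) (hk : k ≤ K) :
    stepWeight a β K k = a k + β * stepWeight a β K (k + 1) := by
  unfold stepWeight
  rw [← insert_Icc_add_one_left_eq_Icc hk, sum_insert (by simp), mul_sum, Nat.sub_self, pow_zero,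
    mul_one]
  congr 1
  refine sum_congr rfl fun j hj ↦ ?_
  rw [show j - k = j - (k + 1) + 1 by have := (mem_Icc.1 hj).1; omega, pow_succ]
  ring

lemma stepWeight_of_lt (a : ℕ → ℝ) (β : ℝ) (hk : K < k) : stepWeight a β K k = 0 := by
  simp [stepWeight, Icc_eq_empty_of_lt hk]

lemma stepWeight_nonneg (hβ : 0 ≤ β) (ha : ∀ j, 1 ≤ j → 0 ≤ a j) (hk : 1 ≤ k) :
    0 ≤ stepWeight a β K k :=
  sum_nonneg fun j hj ↦ mul_nonneg (ha j (hk.trans (mem_Icc.1 hj).1)) (pow_nonneg hβ _)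

lemma le_stepWeight (hβ : 0 ≤ β) (ha : ∀ j, 1 ≤ j → 0 ≤ a j) (hk : k ∈ Icc 1 K) :
    a k ≤ stepWeight a β K k := by
  rw [stepWeight_eq_add a β (mem_Icc.1 hk).2]
  exact le_add_of_nonneg_right (mul_nonneg hβ (stepWeight_nonneg hβ ha k.succ_pos))

-- Convexity of the square: `w k = (1 - β) * (a k / (1 - β)) + β * w (k + 1)`.
lemma sq_stepWeight_le (hβ0 : 0 ≤ β) (hβ1 : β < 1) (hk : k ≤ K) :
    stepWeight a β K k ^ 2 ≤ a k ^ 2 / (1 - β) + β * stepWeight a β K (k + 1) ^ 2 := by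
  have hβ : 0 < 1 - β := sub_pos.2 hβ1
  rw [stepWeight_eq_add a β hk]
  set w := stepWeight a β K (k + 1)
  have hdefect : a k ^ 2 / (1 - β) + β * w ^ 2 - (a k + β * w) ^ 2
      = β / (1 - β) * (a k - (1 - β) * w) ^ 2 := by
    field_simp
    ring
  have : 0 ≤ β / (1 - β) * (a k - (1 - β) * w) ^ 2 := by positivity
  linarith

lemma sum_sq_stepWeight_le (a : ℕ → ℝ) (hβ0 : 0 ≤ β) (hβ1 : β < 1) (K : ℕ) :
    ∑ k ∈ Icc 1 K, stepWeight a β K k ^ 2 ≤ (∑ k ∈ Icc 1 K, a k ^ 2) / (1 - β) ^ 2 := by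
  have hβ : 0 < 1 - β := sub_pos.2 hβ1
  set w := stepWeight a β K
  have hshift : ∑ k ∈ Icc 1 K, w (k + 1) ^ 2 ≤ ∑ k ∈ Icc 1 K, w k ^ 2 := by
    have h := sum_Icc_one_sub (fun k ↦ w k ^ 2) K
    have hlast : w (K + 1) = 0 := stepWeight_of_lt a β K.lt_succ_self
    rw [sum_sub_distrib, hlast] at h
    linarith [sq_nonneg (w 1)]
  have hself : ∑ k ∈ Icc 1 K, w k ^ 2
      ≤ (∑ k ∈ Icc 1 K, a k ^ 2) / (1 - β) + β * ∑ k ∈ Icc 1 K, w k ^ 2 :=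
    calc ∑ k ∈ Icc 1 K, w k ^ 2
        ≤ ∑ k ∈ Icc 1 K, (a k ^ 2 / (1 - β) + β * w (k + 1) ^ 2) :=
          sum_le_sum fun k hk ↦ sq_stepWeight_le hβ0 hβ1 (mem_Icc.1 hk).2
      _ = (∑ k ∈ Icc 1 K, a k ^ 2) / (1 - β) + β * ∑ k ∈ Icc 1 K, w (k + 1) ^ 2 := by
          rw [sum_add_distrib, ← sum_div, ← mul_sum]
      _ ≤ _ := by gcongr
  rw [sq, ← div_div, le_div_iff₀ hβ]
  linarith

end StepWeight

/-- The exponential moving average of `u 1, u 2, …` started from `0`, that is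
`∑_{j=1}^k (1 - β) β^(k-j) u j`; the value `u 0` does not enter. Both AMSGrad moments are of this
form: the first is the average of the gradients, the second that of their squares. -/
noncomputable def expMovingAvg (β : ℝ) (u : ℕ → ℝ) : ℕ → ℝ
  | 0 => 0
  | k + 1 => β * expMovingAvg β u k + (1 - β) * u (k + 1)

section ExpMovingAvg

variable {β : ℝ} {u : ℕ → ℝ}

lemma eq_expMovingAvg {m : ℕ → ℝ} (h0 : m 0 = 0)
    (hm : ∀ k, m (k + 1) = β * m k + (1 - β) * u (k + 1)) : m = expMovingAvg β u := by
  funext k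
  induction k with
  | zero => exact h0
  | succ k ih => rw [hm, ih, expMovingAvg]

lemma expMovingAvg_le (hβ0 : 0 ≤ β) (hβ1 : β ≤ 1) {B : ℝ} (hB : 0 ≤ B) {k : ℕ}
    (hu : ∀ j ∈ Icc 1 k, u j ≤ B) : expMovingAvg β u k ≤ B := by
  have : 0 ≤ 1 - β := sub_nonneg.2 hβ1
  induction k with
  | zero => exact hB
  | succ k ih =>
    calc expMovingAvg β u (k + 1) ≤ β * B + (1 - β) * B := by
          rw [expMovingAvg]
          gcongr
          · exact ih fun j hj ↦ hu j (Icc_subset_Icc_right k.le_succ hj)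
          · exact hu (k + 1) (by simp)
      _ = B := by ring

lemma expMovingAvg_nonneg (hβ0 : 0 ≤ β) (hβ1 : β ≤ 1) (hu : ∀ j, 0 ≤ u j) (k : ℕ) :
    0 ≤ expMovingAvg β u k := by
  have hβ : 0 ≤ 1 - β := sub_nonneg.2 hβ1
  induction k with
  | zero => exact le_rfl
  | succ k ih => exact add_nonneg (mul_nonneg hβ0 ih) (mul_nonneg hβ (hu _))

lemma abs_expMovingAvg_le (hβ0 : 0 ≤ β) (hβ1 : β ≤ 1) (u : ℕ → ℝ) (k : ℕ) :
    |expMovingAvg β u k| ≤ expMovingAvg β (fun j ↦ |u j|) k := by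
  induction k with
  | zero => simp [expMovingAvg]
  | succ k ih =>
    simp only [expMovingAvg]
    refine (abs_add_le _ _).trans ?_
    rw [abs_mul, abs_mul, abs_of_nonneg hβ0, abs_of_nonneg (sub_nonneg.2 hβ1)]
    gcongr

lemma sum_expMovingAvg {ι : Type*} (t : Finset ι) (β : ℝ) (u : ι → ℕ → ℝ) (k : ℕ) :
    ∑ i ∈ t, expMovingAvg β (u i) k = expMovingAvg β (fun j ↦ ∑ i ∈ t, u i j) k := by
  induction k with
  | zero => simp [expMovingAvg]
  | succ k ih => simp only [expMovingAvg, sum_add_distrib, ← mul_sum, ih]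

lemma mul_le_expMovingAvg_succ (hβ0 : 0 ≤ β) (hβ1 : β ≤ 1) (hu : ∀ j, 0 ≤ u j) (k : ℕ) :
    (1 - β) * u (k + 1) ≤ expMovingAvg β u (k + 1) :=
  le_add_of_nonneg_left (mul_nonneg hβ0 (expMovingAvg_nonneg hβ0 hβ1 hu k))

end ExpMovingAvg

/-- The AMSGrad preconditioner `√v̂` of a scalar gradient sequence `g`, where `v̂` is the running
maximum of the moving average of the squared gradients. -/
noncomputable def amsgradScale (β : ℝ) (g : ℕ → ℝ) (k : ℕ) : ℝ :=
  √(partialSups (expMovingAvg β fun j ↦ g j ^ 2) k)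

section AmsgradScale

variable {β β₁ β₂ G : ℝ} {g : ℕ → ℝ}

lemma sqrt_eq_amsgradScale {v vhat : ℕ → ℝ} (hv0 : v 0 = 0) (hvhat0 : vhat 0 = 0)
    (hv : ∀ k, v (k + 1) = β * v k + (1 - β) * g (k + 1) ^ 2)
    (hvhat : ∀ k, vhat (k + 1) = max (vhat k) (v (k + 1))) (k : ℕ) :
    √(vhat k) = amsgradScale β g k := by
  rw [amsgradScale, ← eq_expMovingAvg hv0 hv]
  congr 1
  induction k with
  | zero => rw [hvhat0, partialSups_zero, hv0]
  | succ k ih => rw [hvhat, ih, partialSups_add_one]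

lemma monotone_amsgradScale (β : ℝ) (g : ℕ → ℝ) : Monotone (amsgradScale β g) :=
  fun _ _ h ↦ Real.sqrt_le_sqrt ((partialSups _).monotone h)

lemma amsgradScale_nonneg (β : ℝ) (g : ℕ → ℝ) (k : ℕ) : 0 ≤ amsgradScale β g k :=
  Real.sqrt_nonneg _

lemma amsgradScale_le (hβ0 : 0 ≤ β) (hβ1 : β ≤ 1) (hg : ∀ k, 1 ≤ k → |g k| ≤ G) (k : ℕ) :
    amsgradScale β g k ≤ G := by
  have hG : 0 ≤ G := (abs_nonneg _).trans (hg 1 le_rfl)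
  refine (Real.sqrt_le_left hG).2 (partialSups_le _ _ _ fun j _ ↦ ?_)
  exact expMovingAvg_le hβ0 hβ1 (sq_nonneg G) fun i hi ↦
    sq_le_sq.2 ((hg i (mem_Icc.1 hi).1).trans (le_abs_self G))

lemma abs_le_amsgradScale_div (hβ0 : 0 ≤ β) (hβ1 : β < 1) {j k : ℕ} (hj : j ∈ Icc 1 k) :
    |g j| ≤ amsgradScale β g k / √(1 - β) := by
  have hβ : 0 < 1 - β := sub_pos.2 hβ1
  obtain ⟨hj1, hjk⟩ := mem_Icc.1 hj
  obtain ⟨i, rfl⟩ := Nat.exists_eq_add_of_le' hj1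
  rw [le_div_iff₀ (Real.sqrt_pos.2 hβ), ← Real.sqrt_sq_eq_abs, ← Real.sqrt_mul (sq_nonneg _)]
  refine Real.sqrt_le_sqrt ?_
  calc g (i + 1) ^ 2 * (1 - β) = (1 - β) * g (i + 1) ^ 2 := mul_comm _ _
    _ ≤ expMovingAvg β (fun j ↦ g j ^ 2) (i + 1) :=
        mul_le_expMovingAvg_succ hβ0 hβ1.le (fun j ↦ sq_nonneg (g j)) i
    _ ≤ partialSups (expMovingAvg β fun j ↦ g j ^ 2) k := le_partialSups_of_le _ hjk

lemma sq_expMovingAvg_le_amsgradScale_mul (hβ₁0 : 0 ≤ β₁) (hβ₁1 : β₁ ≤ 1) (hβ₂0 : 0 ≤ β₂)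
    (hβ₂1 : β₂ < 1) (g : ℕ → ℝ) (k : ℕ) :
    expMovingAvg β₁ g k ^ 2
      ≤ amsgradScale β₂ g k * (expMovingAvg β₁ (fun j ↦ |g j|) k / √(1 - β₂)) := by
  set A := expMovingAvg β₁ (fun j ↦ |g j|) k
  have hm : |expMovingAvg β₁ g k| ≤ A := abs_expMovingAvg_le hβ₁0 hβ₁1 g k
  have hA : A ≤ amsgradScale β₂ g k / √(1 - β₂) :=
    expMovingAvg_le hβ₁0 hβ₁1 (div_nonneg (amsgradScale_nonneg β₂ g k) (Real.sqrt_nonneg _))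
      fun j hj ↦ abs_le_amsgradScale_div hβ₂0 hβ₂1 hj
  have hA0 : 0 ≤ A := (abs_nonneg _).trans hm
  calc expMovingAvg β₁ g k ^ 2 = |expMovingAvg β₁ g k| ^ 2 := (sq_abs _).symm
    _ ≤ A ^ 2 := by gcongr
    _ = A * A := sq A
    _ ≤ amsgradScale β₂ g k / √(1 - β₂) * A := by gcongr
    _ = amsgradScale β₂ g k * (A / √(1 - β₂)) := by ring

end AmsgradScale

section Regret

lemma sum_stepWeight_mul_eq_sum_expMovingAvg (β : ℝ) (a g d : ℕ → ℝ) (K : ℕ) :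
    ∑ k ∈ Icc 1 K, (1 - β) * stepWeight a β K k * (g k * d k)
      = ∑ k ∈ Icc 1 K, (stepWeight a β K k * expMovingAvg β g k * (d k - d (k + 1))
          + a k * expMovingAvg β g k * d (k + 1)) := by
  set w := stepWeight a β K
  set m := expMovingAvg β g with hm
  let u : ℕ → ℝ := fun k ↦ β * w k * m (k - 1) * d k
  have hterm (k : ℕ) (hk : k ∈ Icc 1 K) :
      (1 - β) * w k * (g k * d k) - (w k * m k * (d k - d (k + 1)) + a k * m k * d (k + 1))
        = u (k + 1) - u k := by
    obtain ⟨hk1, hkK⟩ := mem_Icc.1 hk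
    have hw : w k = a k + β * w (k + 1) := stepWeight_eq_add a β hkK
    obtain ⟨j, rfl⟩ := Nat.exists_eq_add_of_le' hk1
    have hmj : m (j + 1) = β * m j + (1 - β) * g (j + 1) := by rw [hm, expMovingAvg]
    simp only [u, Nat.add_sub_cancel]
    linear_combination (-w (j + 1) * d (j + 1)) * hmj + m (j + 1) * d (j + 1 + 1) * hw
  rw [← sub_eq_zero, ← sum_sub_distrib, sum_congr rfl hterm, sum_Icc_one_sub]
  simp [u, w, m, stepWeight_of_lt, expMovingAvg]

lemma mul_mul_le_half_add_of_sq_le_mul {w m δ s r : ℝ} (hs : 0 ≤ s) (hr : 0 ≤ r)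
    (hm : m ^ 2 ≤ s * r) : w * m * δ ≤ (s * δ ^ 2 + w ^ 2 * r) / 2 := by
  have h : (w * m * δ) ^ 2 ≤ (s * δ ^ 2) * (w ^ 2 * r) :=
    calc (w * m * δ) ^ 2 = w ^ 2 * δ ^ 2 * m ^ 2 := by ring
      _ ≤ w ^ 2 * δ ^ 2 * (s * r) := by gcongr
      _ = (s * δ ^ 2) * (w ^ 2 * r) := by ring
  rw [le_div_iff₀' two_pos]
  exact two_mul_le_add_of_sq_le_mul (by positivity) (by positivity) h

lemma sum_scaled_step_le {a w m s r d : ℕ → ℝ} {D : ℝ} (hs : Monotone s) (hs0 : 0 ≤ s 0)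
    (hr : ∀ k, 0 ≤ r k) (hm : ∀ k, m k ^ 2 ≤ s k * r k) (hd : ∀ k, 1 ≤ k → |d k| ≤ D) (K : ℕ) :
    ∑ k ∈ Icc 1 K, (w k * m k * (d k - d (k + 1)) + a k * m k * d (k + 1))
      ≤ (s K * D ^ 2 + ∑ k ∈ Icc 1 K, w k ^ 2 * r k) / 2
        + ∑ k ∈ Icc 1 K, d (k + 1) * (s k * (d (k + 1) - d k) + a k * m k) := by
  have hterm (k : ℕ) : w k * m k * (d k - d (k + 1)) + a k * m k * d (k + 1)
      ≤ (s k * (d k ^ 2 - d (k + 1) ^ 2) + w k ^ 2 * r k) / 2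
        + d (k + 1) * (s k * (d (k + 1) - d k) + a k * m k) := by
    have hyoung : w k * m k * (d k - d (k + 1))
        ≤ (s k * (d k - d (k + 1)) ^ 2 + w k ^ 2 * r k) / 2 :=
      mul_mul_le_half_add_of_sq_le_mul (hs0.trans (hs k.zero_le)) (hr k) (hm k)
    linarith
  have htelescope : ∑ k ∈ Icc 1 K, s k * (d k ^ 2 - d (k + 1) ^ 2) ≤ s K * D ^ 2 :=
    sum_mul_sub_succ_le hs hs0 (fun k _ ↦ sq_nonneg (d k))
      (fun k hk ↦ sq_le_sq.2 ((hd k hk).trans (le_abs_self D))) K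
  refine (sum_le_sum fun k _ ↦ hterm k).trans ?_
  rw [sum_add_distrib, ← sum_div, sum_add_distrib]
  gcongr

lemma sum_stepWeight_mul_coord_le {β₁ β₂ D G : ℝ} (hβ₁0 : 0 ≤ β₁) (hβ₁1 : β₁ ≤ 1) (hβ₂0 : 0 ≤ β₂)
    (hβ₂1 : β₂ < 1) {a g d : ℕ → ℝ} (hd : ∀ k, 1 ≤ k → |d k| ≤ D) (hg : ∀ k, 1 ≤ k → |g k| ≤ G)
    (K : ℕ) :
    ∑ k ∈ Icc 1 K, (1 - β₁) * stepWeight a β₁ K k * (g k * d k)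
      ≤ (D ^ 2 * G + ∑ k ∈ Icc 1 K, stepWeight a β₁ K k ^ 2
            * (expMovingAvg β₁ (fun j ↦ |g j|) k / √(1 - β₂))) / 2
        + ∑ k ∈ Icc 1 K, d (k + 1)
            * (amsgradScale β₂ g k * (d (k + 1) - d k) + a k * expMovingAvg β₁ g k) := by
  have hr (k : ℕ) : 0 ≤ expMovingAvg β₁ (fun j ↦ |g j|) k / √(1 - β₂) :=
    div_nonneg (expMovingAvg_nonneg hβ₁0 hβ₁1 (fun j ↦ abs_nonneg (g j)) k) (Real.sqrt_nonneg _)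
  rw [sum_stepWeight_mul_eq_sum_expMovingAvg]
  refine (sum_scaled_step_le (monotone_amsgradScale β₂ g) (amsgradScale_nonneg β₂ g 0) hr
    (sq_expMovingAvg_le_amsgradScale_mul hβ₁0 hβ₁1 hβ₂0 hβ₂1 g) hd K).trans ?_
  rw [mul_comm (D ^ 2)]
  gcongr
  exact amsgradScale_le hβ₂0 hβ₂1.le hg K

lemma sum_stepWeight_mul_inner_le {ι : Type*} [Fintype ι] {β₁ β₂ D G : ℝ} (hβ₁0 : 0 ≤ β₁)
    (hβ₁1 : β₁ ≤ 1) (hβ₂0 : 0 ≤ β₂) (hβ₂1 : β₂ < 1) {a : ℕ → ℝ} {g x : ℕ → ι → ℝ} {y : ι → ℝ}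
    (hx : ∀ k, 1 ≤ k → ∀ i, |x k i - y i| ≤ D) (hg : ∀ k, 1 ≤ k → ∀ i, |g k i| ≤ G)
    (hopt : ∀ k, 1 ≤ k → ∑ i, (x (k + 1) i - y i)
      * (amsgradScale β₂ (fun j ↦ g j i) k * (x (k + 1) i - x k i)
        + a k * expMovingAvg β₁ (fun j ↦ g j i) k) ≤ 0) (K : ℕ) :
    ∑ k ∈ Icc 1 K, (1 - β₁) * stepWeight a β₁ K k * ∑ i, g k i * (x k i - y i)
      ≤ Fintype.card ι * D ^ 2 * G / 2 + ∑ k ∈ Icc 1 K, stepWeight a β₁ K k ^ 2 / 2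
          * (expMovingAvg β₁ (fun j ↦ ∑ i, |g j i|) k / √(1 - β₂)) := by
  set w := stepWeight a β₁ K
  have hcoord (i : ι) := sum_stepWeight_mul_coord_le hβ₁0 hβ₁1 hβ₂0 hβ₂1 (a := a)
    (fun k hk ↦ hx k hk i) (fun k hk ↦ hg k hk i) K
  have hstep : ∑ i, ∑ k ∈ Icc 1 K, (x (k + 1) i - y i)
      * (amsgradScale β₂ (fun j ↦ g j i) k * (x (k + 1) i - y i - (x k i - y i))
        + a k * expMovingAvg β₁ (fun j ↦ g j i) k) ≤ 0 := by
    simp only [sub_sub_sub_cancel_right]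
    rw [sum_comm]
    exact sum_nonpos fun k hk ↦ hopt k (mem_Icc.1 hk).1
  calc ∑ k ∈ Icc 1 K, (1 - β₁) * w k * ∑ i, g k i * (x k i - y i)
      = ∑ i, ∑ k ∈ Icc 1 K, (1 - β₁) * w k * (g k i * (x k i - y i)) := by
        simp only [mul_sum]
        exact sum_comm
    _ ≤ ∑ i, (D ^ 2 * G + ∑ k ∈ Icc 1 K, w k ^ 2
          * (expMovingAvg β₁ (fun j ↦ |g j i|) k / √(1 - β₂))) / 2 := by
        refine (sum_le_sum fun i _ ↦ hcoord i).trans ?_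
        rw [sum_add_distrib]
        exact add_le_of_nonpos_right hstep
    _ = _ := by
        simp only [← sum_expMovingAvg, sum_div, mul_sum, add_div, sum_add_distrib]
        rw [sum_comm, sum_const, card_univ, nsmul_eq_mul]
        congr 1
        · ring
        · exact sum_congr rfl fun k _ ↦ sum_congr rfl fun i _ ↦ by ring

end Regret

section Expectation

variable {Ω : Type*} {mΩ : MeasurableSpace Ω} {P : Measure Ω}

lemma integral_condExp_mul {ℋ : MeasurableSpace Ω} (hℋ : ℋ ≤ mΩ) [SigmaFinite (P.trim hℋ)]
    {f z : Ω → ℝ} (hz : StronglyMeasurable[ℋ] z) (hfz : Integrable (fun ω ↦ f ω * z ω) P)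
    (hf : Integrable f P) : ∫ ω, (P[f | ℋ]) ω * z ω ∂P = ∫ ω, f ω * z ω ∂P := by
  rw [← integral_condExp hℋ (f := fun ω ↦ f ω * z ω)]
  exact (integral_congr_ae (condExp_mul_of_stronglyMeasurable_right hz hfz hf)).symm

lemma integral_le_integral_sum_mul_of_le_sum_condExp_mul {ι : Type*} [Fintype ι]
    {ℋ : MeasurableSpace Ω} (hℋ : ℋ ≤ mΩ) [SigmaFinite (P.trim hℋ)] {f : Ω → ℝ} {g z : Ω → ι → ℝ}
    (hz : Measurable[ℋ] z) (hf : Integrable f P) (hg : ∀ i, Integrable (fun ω ↦ g ω i) P)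
    (hgz : ∀ i, Integrable (fun ω ↦ g ω i * z ω i) P)
    (hle : ∀ᵐ ω ∂P, f ω ≤ ∑ i, (P[fun ω' ↦ g ω' i | ℋ]) ω * z ω i) :
    ∫ ω, f ω ∂P ≤ ∫ ω, ∑ i, g ω i * z ω i ∂P := by
  have hzi (i : ι) : StronglyMeasurable[ℋ] fun ω ↦ z ω i :=
    ((measurable_pi_apply i).comp hz).stronglyMeasurable
  have hcz (i : ι) : Integrable (fun ω ↦ (P[fun ω' ↦ g ω' i | ℋ]) ω * z ω i) P :=
    integrable_condExp.congr (condExp_mul_of_stronglyMeasurable_right (hzi i) (hgz i) (hg i))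
  calc ∫ ω, f ω ∂P ≤ ∫ ω, ∑ i, (P[fun ω' ↦ g ω' i | ℋ]) ω * z ω i ∂P :=
        integral_mono_ae hf (integrable_finsetSum _ fun i _ ↦ hcz i) hle
    _ = ∫ ω, ∑ i, g ω i * z ω i ∂P := by
        rw [integral_finsetSum _ fun i _ ↦ hcz i, integral_finsetSum _ fun i _ ↦ hgz i]
        exact sum_congr rfl fun i _ ↦ integral_condExp_mul hℋ (hzi i) (hgz i) (hg i)

lemma integrable_expMovingAvg (β : ℝ) {u : ℕ → Ω → ℝ} (hu : ∀ k, 1 ≤ k → Integrable (u k) P)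
    (k : ℕ) : Integrable (fun ω ↦ expMovingAvg β (fun j ↦ u j ω) k) P := by
  induction k with
  | zero => exact integrable_zero Ω ℝ P
  | succ k ih => exact (ih.const_mul β).add ((hu (k + 1) k.succ_pos).const_mul (1 - β))

lemma integral_expMovingAvg (β : ℝ) {u : ℕ → Ω → ℝ} (hu : ∀ k, 1 ≤ k → Integrable (u k) P)
    (k : ℕ) :
    ∫ ω, expMovingAvg β (fun j ↦ u j ω) k ∂P = expMovingAvg β (fun j ↦ ∫ ω, u j ω ∂P) k := by
  induction k with
  | zero => simp [expMovingAvg]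
  | succ k ih =>
    simp only [expMovingAvg]
    rw [integral_add ((integrable_expMovingAvg β hu k).const_mul β)
      ((hu (k + 1) k.succ_pos).const_mul _), integral_const_mul, integral_const_mul, ih]

lemma sum_mul_integral_le_of_ae_sum_mul_le [IsProbabilityMeasure P] {κ : Type*} {t : Finset κ}
    {p q : κ → ℝ} {I R : κ → Ω → ℝ} {B C : ℝ} (hq : ∀ k ∈ t, 0 ≤ q k)
    (hI : ∀ k ∈ t, Integrable (I k) P) (hR : ∀ k ∈ t, Integrable (R k) P)
    (hRB : ∀ k ∈ t, ∫ ω, R k ω ∂P ≤ B)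
    (hle : ∀ᵐ ω ∂P, ∑ k ∈ t, p k * I k ω ≤ C + ∑ k ∈ t, q k * R k ω) :
    ∑ k ∈ t, p k * ∫ ω, I k ω ∂P ≤ C + (∑ k ∈ t, q k) * B := by
  have hpI (k : κ) (hk : k ∈ t) : Integrable (fun ω ↦ p k * I k ω) P := (hI k hk).const_mul _
  have hqR (k : κ) (hk : k ∈ t) : Integrable (fun ω ↦ q k * R k ω) P := (hR k hk).const_mul _
  calc ∑ k ∈ t, p k * ∫ ω, I k ω ∂P = ∫ ω, ∑ k ∈ t, p k * I k ω ∂P := by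
        simp only [integral_finsetSum t hpI, integral_const_mul]
    _ ≤ ∫ ω, (C + ∑ k ∈ t, q k * R k ω) ∂P :=
        integral_mono_ae (integrable_finsetSum t hpI)
          ((integrable_const C).add (integrable_finsetSum t hqR)) hle
    _ = C + ∑ k ∈ t, q k * ∫ ω, R k ω ∂P := by
        rw [integral_add (integrable_const C) (integrable_finsetSum t hqR),
          integral_finsetSum t hqR]
        simp [integral_const_mul]
    _ ≤ C + (∑ k ∈ t, q k) * B := by
        rw [sum_mul]
        gcongr with k hk
        · exact hq k hk
        · exact hRB k hk

lemma sum_mul_integral_map_centerMass_le {E κ : Type*} [AddCommGroup E] [Module ℝ E] {F : E → ℝ}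
    (hF : ConvexOn ℝ Set.univ F) {t : Finset κ} {w : κ → ℝ} (hw : ∀ k ∈ t, 0 ≤ w k)
    (hW : 0 < ∑ k ∈ t, w k) {x : κ → Ω → E} (hx : ∀ k ∈ t, Integrable (fun ω ↦ F (x k ω)) P)
    (hxbar : Integrable (fun ω ↦ F (t.centerMass w fun k ↦ x k ω)) P) :
    (∑ k ∈ t, w k) * ∫ ω, F (t.centerMass w fun k ↦ x k ω) ∂P
      ≤ ∑ k ∈ t, w k * ∫ ω, F (x k ω) ∂P := by
  have hwx (k : κ) (hk : k ∈ t) : Integrable (fun ω ↦ w k * F (x k ω)) P := (hx k hk).const_mul _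
  have hjensen (ω : Ω) :
      (∑ k ∈ t, w k) * F (t.centerMass w fun k ↦ x k ω) ≤ ∑ k ∈ t, w k * F (x k ω) := by
    rw [← le_div_iff₀' hW]
    exact (hF.map_centerMass_le hw hW fun _ _ ↦ Set.mem_univ _).trans_eq
      (by simp [centerMass, div_eq_inv_mul])
  calc (∑ k ∈ t, w k) * ∫ ω, F (t.centerMass w fun k ↦ x k ω) ∂P
      = ∫ ω, (∑ k ∈ t, w k) * F (t.centerMass w fun k ↦ x k ω) ∂P :=
        (integral_const_mul _ _).symm
    _ ≤ ∫ ω, ∑ k ∈ t, w k * F (x k ω) ∂P :=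
        integral_mono (hxbar.const_mul _) (integrable_finsetSum t hwx) hjensen
    _ = ∑ k ∈ t, w k * ∫ ω, F (x k ω) ∂P := by
        simp only [integral_finsetSum t hwx, integral_const_mul]

lemma integrable_comp_of_ae_mem_isCompact [IsFiniteMeasure P] {E : Type*} [TopologicalSpace E]
    [MeasurableSpace E] [BorelSpace E] {F : E → ℝ} (hF : Continuous F) {s : Set E}
    (hs : IsCompact s) {x : Ω → E} (hx : Measurable x) (hxs : ∀ᵐ ω ∂P, x ω ∈ s) :
    Integrable (fun ω ↦ F (x ω)) P := by
  obtain ⟨C, hC⟩ := (hs.image hF).isBounded.exists_norm_le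
  exact .of_bound (hF.measurable.comp hx).aestronglyMeasurable C
    (hxs.mono fun ω hω ↦ hC _ ⟨x ω, hω, rfl⟩)

lemma centerMass_eq_sum_mul_div_sum {ι κ : Type*} (t : Finset κ) (w : κ → ℝ) (z : κ → ι → ℝ) :
    t.centerMass w z = fun i ↦ (∑ k ∈ t, w k * z k i) / ∑ k ∈ t, w k := by
  funext i
  simp [centerMass, Finset.sum_apply, div_eq_inv_mul]

variable {ι : Type*} [Fintype ι] [IsProbabilityMeasure P] {F : (ι → ℝ) → ℝ} {y : ι → ℝ}

lemma integral_sub_le_integral_sum_mul_sub {ℋ : MeasurableSpace Ω} (hℋ : ℋ ≤ mΩ)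
    {x g : Ω → ι → ℝ} {D : ℝ} (hxmeas : Measurable[ℋ] x) (hx : ∀ᵐ ω ∂P, ∀ i, |x ω i - y i| ≤ D)
    (hFx : Integrable (fun ω ↦ F (x ω)) P) (hg : ∀ i, Integrable (fun ω ↦ g ω i) P)
    (hsub : ∀ᵐ ω ∂P, F y ≥ F (x ω) + ∑ i, (P[fun ω' ↦ g ω' i | ℋ]) ω * (y i - x ω i)) :
    ∫ ω, F (x ω) ∂P - F y ≤ ∫ ω, ∑ i, g ω i * (x ω i - y i) ∂P := by
  have hzmeas : Measurable[ℋ] fun ω i ↦ x ω i - y i :=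
    @measurable_pi_lambda _ _ _ ℋ _ _ fun i ↦ ((measurable_pi_apply i).comp hxmeas).sub_const (y i)
  have hgz (i : ι) : Integrable (fun ω ↦ g ω i * (x ω i - y i)) P :=
    (hg i).mul_bdd (((measurable_pi_apply i).comp (hzmeas.mono hℋ le_rfl)).aestronglyMeasurable)
      (hx.mono fun ω hω ↦ hω i)
  have hle : ∀ᵐ ω ∂P, F (x ω) - F y ≤ ∑ i, (P[fun ω' ↦ g ω' i | ℋ]) ω * (x ω i - y i) := by
    filter_upwards [hsub] with ω hω
    have hneg : ∑ i, (P[fun ω' ↦ g ω' i | ℋ]) ω * (x ω i - y i)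
        = -∑ i, (P[fun ω' ↦ g ω' i | ℋ]) ω * (y i - x ω i) := by
      simp only [← sum_neg_distrib, ← mul_neg, neg_sub]
    linarith
  calc ∫ ω, F (x ω) ∂P - F y = ∫ ω, (F (x ω) - F y) ∂P := by
        rw [integral_sub hFx (integrable_const _)]
        simp
    _ ≤ ∫ ω, ∑ i, g ω i * (x ω i - y i) ∂P :=
        integral_le_integral_sum_mul_of_le_sum_condExp_mul hℋ hzmeas
          (hFx.sub (integrable_const _)) hg hgz hle

variable {g x : ℕ → Ω → ι → ℝ} {D G : ℝ}

lemma sum_mul_integral_map_centerMass_sub_le {ℱ : Filtration ℕ mΩ} (hF : ConvexOn ℝ Set.univ F)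
    (hxmeas : ∀ k, Measurable[ℱ k] (x k))
    (hx : ∀ᵐ ω ∂P, ∀ k, 1 ≤ k → ∀ i, |x k ω i - y i| ≤ D)
    (hg : ∀ k, 1 ≤ k → ∀ i, Integrable (fun ω ↦ g k ω i) P)
    (hsub : ∀ k, 1 ≤ k → ∀ᵐ ω ∂P,
      F y ≥ F (x k ω) + ∑ i, (P[fun ω' ↦ g k ω' i | ℱ k]) ω * (y i - x k ω i))
    {w : ℕ → ℝ} {K : ℕ} (hw : ∀ k ∈ Icc 1 K, 0 ≤ w k) (hW : 0 < ∑ k ∈ Icc 1 K, w k) :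
    (∑ k ∈ Icc 1 K, w k) * (∫ ω, F ((Icc 1 K).centerMass w fun k ↦ x k ω) ∂P - F y)
      ≤ ∑ k ∈ Icc 1 K, w k * ∫ ω, ∑ i, g k ω i * (x k ω i - y i) ∂P := by
  have hFcont : Continuous F := continuousOn_univ.1 (hF.continuousOn isOpen_univ)
  have hxm (k : ℕ) : Measurable (x k) := (hxmeas k).mono (ℱ.le k) le_rfl
  let box : Set (ι → ℝ) := Set.Icc (fun i ↦ y i - D) fun i ↦ y i + D
  have hbox : ∀ᵐ ω ∂P, ∀ k ∈ Icc 1 K, x k ω ∈ box := by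
    filter_upwards [hx] with ω hω k hk
    have h (i : ι) := abs_sub_le_iff.1 (hω k (mem_Icc.1 hk).1 i)
    exact ⟨fun i ↦ by linarith [h i], fun i ↦ by linarith [h i]⟩
  have hFx (k : ℕ) (hk : k ∈ Icc 1 K) : Integrable (fun ω ↦ F (x k ω)) P :=
    integrable_comp_of_ae_mem_isCompact hFcont isCompact_Icc (hxm k)
      (hbox.mono fun ω hω ↦ hω k hk)
  have hFxbar : Integrable (fun ω ↦ F ((Icc 1 K).centerMass w fun k ↦ x k ω)) P :=
    integrable_comp_of_ae_mem_isCompact hFcont isCompact_Icc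
      (by unfold centerMass; fun_prop)
      (hbox.mono fun ω hω ↦ (convex_Icc _ _).centerMass_mem hw hW hω)
  calc (∑ k ∈ Icc 1 K, w k) * (∫ ω, F ((Icc 1 K).centerMass w fun k ↦ x k ω) ∂P - F y)
      ≤ ∑ k ∈ Icc 1 K, w k * ∫ ω, F (x k ω) ∂P - (∑ k ∈ Icc 1 K, w k) * F y := by
        rw [mul_sub]
        exact sub_le_sub_right (sum_mul_integral_map_centerMass_le hF hw hW hFx hFxbar) _
    _ = ∑ k ∈ Icc 1 K, w k * (∫ ω, F (x k ω) ∂P - F y) := by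
        simp only [mul_sub, sum_sub_distrib, sum_mul]
    _ ≤ ∑ k ∈ Icc 1 K, w k * ∫ ω, ∑ i, g k ω i * (x k ω i - y i) ∂P := by
        gcongr with k hk
        · exact hw k hk
        have hk1 : 1 ≤ k := (mem_Icc.1 hk).1
        exact integral_sub_le_integral_sum_mul_sub (ℱ.le k) (hxmeas k)
          (hx.mono fun ω hω ↦ hω k hk1) (hFx k hk) (hg k hk1) (hsub k hk1)

lemma sum_stepWeight_mul_integral_inner_le {β₁ β₂ G₁ : ℝ} (hβ₁0 : 0 ≤ β₁) (hβ₁1 : β₁ ≤ 1)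
    (hβ₂0 : 0 ≤ β₂) (hβ₂1 : β₂ < 1) {a : ℕ → ℝ} (hxmeas : ∀ k, Measurable (x k))
    (hx : ∀ᵐ ω ∂P, ∀ k, 1 ≤ k → ∀ i, |x k ω i - y i| ≤ D)
    (hgint : ∀ k, 1 ≤ k → ∀ i, Integrable (fun ω ↦ g k ω i) P)
    (hg : ∀ k, 1 ≤ k → ∀ᵐ ω ∂P, ∀ i, |g k ω i| ≤ G)
    (hG₁ : ∀ k, 1 ≤ k → ∫ ω, ∑ i, |g k ω i| ∂P ≤ G₁)
    (hopt : ∀ᵐ ω ∂P, ∀ k, 1 ≤ k → ∑ i, (x (k + 1) ω i - y i)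
      * (amsgradScale β₂ (fun j ↦ g j ω i) k * (x (k + 1) ω i - x k ω i)
        + a k * expMovingAvg β₁ (fun j ↦ g j ω i) k) ≤ 0) (K : ℕ) :
    ∑ k ∈ Icc 1 K, (1 - β₁) * stepWeight a β₁ K k * ∫ ω, ∑ i, g k ω i * (x k ω i - y i) ∂P
      ≤ Fintype.card ι * D ^ 2 * G / 2
        + (∑ k ∈ Icc 1 K, stepWeight a β₁ K k ^ 2 / 2) * (G₁ / √(1 - β₂)) := by
  have hnorm (k : ℕ) (hk : 1 ≤ k) : Integrable (fun ω ↦ ∑ i, |g k ω i|) P :=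
    integrable_finsetSum _ fun i _ ↦ (hgint k hk i).abs
  have hinner (k : ℕ) (hk : 1 ≤ k) : Integrable (fun ω ↦ ∑ i, g k ω i * (x k ω i - y i)) P :=
    integrable_finsetSum _ fun i _ ↦ (hgint k hk i).mul_bdd
      (((measurable_pi_apply i).comp (hxmeas k)).sub_const _).aestronglyMeasurable
      (hx.mono fun ω hω ↦ hω k hk i)
  have hG₁0 : 0 ≤ G₁ :=
    (integral_nonneg fun ω ↦ sum_nonneg fun i _ ↦ abs_nonneg (g 1 ω i)).trans (hG₁ 1 le_rfl)
  have hcost (k : ℕ) :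
      ∫ ω, expMovingAvg β₁ (fun j ↦ ∑ i, |g j ω i|) k / √(1 - β₂) ∂P ≤ G₁ / √(1 - β₂) := by
    rw [integral_div, integral_expMovingAvg β₁ hnorm]
    gcongr
    exact expMovingAvg_le hβ₁0 hβ₁1 hG₁0 fun j hj ↦ hG₁ j (mem_Icc.1 hj).1
  refine sum_mul_integral_le_of_ae_sum_mul_le (fun k _ ↦ by positivity)
    (fun k hk ↦ hinner k (mem_Icc.1 hk).1)
    (fun k _ ↦ (integrable_expMovingAvg β₁ hnorm k).div_const _) (fun k _ ↦ hcost k) ?_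
  have hg' : ∀ᵐ ω ∂P, ∀ k, 1 ≤ k → ∀ i, |g k ω i| ≤ G := by
    simpa only [ae_all_iff] using hg
  filter_upwards [hx, hopt, hg'] with ω hxω hoptω hgω
  exact sum_stepWeight_mul_inner_le hβ₁0 hβ₁1 hβ₂0 hβ₂1 hxω hgω hoptω K

lemma sum_stepWeight_mul_integral_sub_le {ℱ : Filtration ℕ mΩ} {β₁ β₂ G₁ : ℝ} (hβ₁0 : 0 ≤ β₁)
    (hβ₁1 : β₁ < 1) (hβ₂0 : 0 ≤ β₂) (hβ₂1 : β₂ < 1) (hF : ConvexOn ℝ Set.univ F) {a : ℕ → ℝ}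
    (ha : ∀ k, 1 ≤ k → 0 ≤ a k) (hxmeas : ∀ k, Measurable[ℱ k] (x k))
    (hx : ∀ᵐ ω ∂P, ∀ k, 1 ≤ k → ∀ i, |x k ω i - y i| ≤ D)
    (hgint : ∀ k, 1 ≤ k → ∀ i, Integrable (fun ω ↦ g k ω i) P)
    (hg : ∀ k, 1 ≤ k → ∀ᵐ ω ∂P, ∀ i, |g k ω i| ≤ G)
    (hG₁ : ∀ k, 1 ≤ k → ∫ ω, ∑ i, |g k ω i| ∂P ≤ G₁)
    (hopt : ∀ᵐ ω ∂P, ∀ k, 1 ≤ k → ∑ i, (x (k + 1) ω i - y i)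
      * (amsgradScale β₂ (fun j ↦ g j ω i) k * (x (k + 1) ω i - x k ω i)
        + a k * expMovingAvg β₁ (fun j ↦ g j ω i) k) ≤ 0)
    (hsub : ∀ k, 1 ≤ k → ∀ᵐ ω ∂P,
      F y ≥ F (x k ω) + ∑ i, (P[fun ω' ↦ g k ω' i | ℱ k]) ω * (y i - x k ω i))
    {K : ℕ} (hW : 0 < ∑ k ∈ Icc 1 K, stepWeight a β₁ K k) :
    (1 - β₁) * ((∑ k ∈ Icc 1 K, stepWeight a β₁ K k)
        * (∫ ω, F ((Icc 1 K).centerMass (stepWeight a β₁ K) fun k ↦ x k ω) ∂P - F y))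
      ≤ (Fintype.card ι * D ^ 2 * G
        + (∑ k ∈ Icc 1 K, a k ^ 2) / (1 - β₁) ^ 2 * (G₁ / √(1 - β₂))) / 2 := by
  have hG₁0 : 0 ≤ G₁ :=
    (integral_nonneg fun ω ↦ sum_nonneg fun i _ ↦ abs_nonneg (g 1 ω i)).trans (hG₁ 1 le_rfl)
  set w := stepWeight a β₁ K
  calc (1 - β₁) * ((∑ k ∈ Icc 1 K, w k)
        * (∫ ω, F ((Icc 1 K).centerMass w fun k ↦ x k ω) ∂P - F y))
      ≤ (1 - β₁) * ∑ k ∈ Icc 1 K, w k * ∫ ω, ∑ i, g k ω i * (x k ω i - y i) ∂P :=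
        mul_le_mul_of_nonneg_left
          (sum_mul_integral_map_centerMass_sub_le hF hxmeas hx hgint hsub
            (fun k hk ↦ stepWeight_nonneg hβ₁0 ha (mem_Icc.1 hk).1) hW) (sub_pos.2 hβ₁1).le
    _ = ∑ k ∈ Icc 1 K, (1 - β₁) * w k * ∫ ω, ∑ i, g k ω i * (x k ω i - y i) ∂P := by
        simp only [mul_sum, mul_assoc]
    _ ≤ Fintype.card ι * D ^ 2 * G / 2 + (∑ k ∈ Icc 1 K, w k ^ 2 / 2) * (G₁ / √(1 - β₂)) :=
        sum_stepWeight_mul_integral_inner_le hβ₁0 hβ₁1.le hβ₂0 hβ₂1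
          (fun k ↦ (hxmeas k).mono (ℱ.le k) le_rfl) hx hgint hg hG₁ hopt K
    _ = (Fintype.card ι * D ^ 2 * G + (∑ k ∈ Icc 1 K, w k ^ 2) * (G₁ / √(1 - β₂))) / 2 := by
        rw [← sum_div]
        ring
    _ ≤ _ := by
        gcongr
        exact sum_sq_stepWeight_le a hβ₁0 hβ₁1 K

end Expectation

theorem stmt1_general {ι : Type*} [Fintype ι] {β₁ β₂ : ℝ} (hβ₁ : β₁ ∈ Set.Ico (0 : ℝ) 1)
    (hβ₂ : β₂ ∈ Set.Ico (0 : ℝ) 1) {Ω : Type*} {mΩ : MeasurableSpace Ω} {P : Measure Ω}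
    [IsProbabilityMeasure P] {ℱ : Filtration ℕ mΩ} {g m v vhat x : ℕ → Ω → ι → ℝ}
    (hgmeas : ∀ k, Measurable (g k)) (hxmeas : ∀ k, Measurable[ℱ k] (x k))
    (hm0 : ∀ ω i, m 0 ω i = 0) (hv0 : ∀ ω i, v 0 ω i = 0) (hvhat0 : ∀ ω i, vhat 0 ω i = 0)
    (hm : ∀ k ω i, m (k + 1) ω i = β₁ * m k ω i + (1 - β₁) * g (k + 1) ω i)
    (hv : ∀ k ω i, v (k + 1) ω i = β₂ * v k ω i + (1 - β₂) * g (k + 1) ω i ^ 2)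
    (hvhat : ∀ k ω i, vhat (k + 1) ω i = max (vhat k ω i) (v (k + 1) ω i))
    {y : ι → ℝ} {D G G₁ : ℝ} (hx : ∀ᵐ ω ∂P, ∀ k, 1 ≤ k → ∀ i, |x k ω i - y i| ≤ D)
    (hg : ∀ k, 1 ≤ k → ∀ᵐ ω ∂P, ∀ i, |g k ω i| ≤ G)
    (hG₁ : ∀ k, 1 ≤ k → ∫ ω, ∑ i, |g k ω i| ∂P ≤ G₁)
    {F : (ι → ℝ) → ℝ} (hF : ConvexOn ℝ Set.univ F) {a : ℕ → ℝ} (ha : ∀ k, 1 ≤ k → 0 ≤ a k)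
    (hopt : ∀ᵐ ω ∂P, ∀ k, 1 ≤ k → ∑ i, (x (k + 1) ω i - y i)
      * (√(vhat k ω i) * (x (k + 1) ω i - x k ω i) + a k * m k ω i) ≤ 0)
    (hsub : ∀ k, 1 ≤ k → ∀ᵐ ω ∂P,
      F y ≥ F (x k ω) + ∑ i, (P[fun ω' ↦ g k ω' i | ℱ k]) ω * (y i - x k ω i))
    {K : ℕ} {S Q : ℝ} (hS : 0 < S) (hSa : S ≤ ∑ k ∈ Icc 1 K, a k)
    (hQ : ∑ k ∈ Icc 1 K, a k ^ 2 ≤ Q) :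
    ∫ ω, F (fun i ↦ (∑ k ∈ Icc 1 K, stepWeight a β₁ K k * x k ω i)
        / ∑ k ∈ Icc 1 K, stepWeight a β₁ K k) ∂P - F y
      ≤ (Fintype.card ι * D ^ 2 * G + Q / (1 - β₁) ^ 2 * (G₁ / √(1 - β₂)))
        / (2 * S * (1 - β₁)) := by
  obtain ⟨hβ₁0, hβ₁1⟩ := hβ₁
  obtain ⟨hβ₂0, hβ₂1⟩ := hβ₂
  have : 0 < 1 - β₁ := sub_pos.2 hβ₁1
  have hm_eq (k ω i) : m k ω i = expMovingAvg β₁ (fun j ↦ g j ω i) k :=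
    congrFun (eq_expMovingAvg (m := fun k ↦ m k ω i) (hm0 ω i) fun k ↦ hm k ω i) k
  have hvhat_eq (k ω i) : √(vhat k ω i) = amsgradScale β₂ (fun j ↦ g j ω i) k :=
    sqrt_eq_amsgradScale (v := fun k ↦ v k ω i) (vhat := fun k ↦ vhat k ω i) (hv0 ω i)
      (hvhat0 ω i) (fun k ↦ hv k ω i) (fun k ↦ hvhat k ω i) k
  simp only [hm_eq, hvhat_eq] at hopt
  have hgint (k : ℕ) (hk : 1 ≤ k) (i : ι) : Integrable (fun ω ↦ g k ω i) P :=
    .of_bound ((measurable_pi_apply i).comp (hgmeas k)).aestronglyMeasurable G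
      ((hg k hk).mono fun ω hω ↦ hω i)
  have hG₁0 : 0 ≤ G₁ :=
    (integral_nonneg fun ω ↦ sum_nonneg fun i _ ↦ abs_nonneg (g 1 ω i)).trans (hG₁ 1 le_rfl)
  have hQ0 : 0 ≤ Q := (sum_nonneg fun k _ ↦ sq_nonneg (a k)).trans hQ
  have hdist : 0 ≤ Fintype.card ι * D ^ 2 * G := by
    cases isEmpty_or_nonempty ι
    · simp
    · obtain ⟨ω, hω⟩ := (hg 1 le_rfl).exists
      have hG : 0 ≤ G := (abs_nonneg _).trans (hω (Classical.arbitrary ι))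
      positivity
  have hSW : S ≤ ∑ k ∈ Icc 1 K, stepWeight a β₁ K k :=
    hSa.trans (sum_le_sum fun k hk ↦ le_stepWeight hβ₁0 ha hk)
  have hW : 0 < ∑ k ∈ Icc 1 K, stepWeight a β₁ K k := hS.trans_le hSW
  have hgap := sum_stepWeight_mul_integral_sub_le hβ₁0 hβ₁1 hβ₂0 hβ₂1 hF ha hxmeas hx hgint hg hG₁
    hopt hsub hW
  simp only [← centerMass_eq_sum_mul_div_sum]
  calc ∫ ω, F ((Icc 1 K).centerMass (stepWeight a β₁ K) fun k ↦ x k ω) ∂P - F y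
      ≤ (Fintype.card ι * D ^ 2 * G
          + (∑ k ∈ Icc 1 K, a k ^ 2) / (1 - β₁) ^ 2 * (G₁ / √(1 - β₂)))
          / (2 * (∑ k ∈ Icc 1 K, stepWeight a β₁ K k) * (1 - β₁)) := by
        rw [le_div_iff₀ (by positivity)]
        linarith
    _ ≤ _ := by gcongr

/-- convex case without delay, diminishing step size: with `α_k = α/√k`,
`w_k = ∑_{j=k}^K α_j β₁^{j−k}` and `x̄^(K) = (∑_k w_k x^(k))/(∑_k w_k)`,
`E[F(x̄^(K))] − F* ≤ (n D∞² G∞ + (α²(1+log K)/(1−β₁)²) G₁/√(1−β₂)) / (4α(√(K+1)−1)(1−β₁))`. -/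
theorem stmt1
    {n : ℕ} (hn : 1 ≤ n)
    (β₁ β₂ : ℝ) (hβ₁ : β₁ ∈ Set.Ico (0:ℝ) 1) (hβ₂ : β₂ ∈ Set.Ico (0:ℝ) 1)
    {Ω : Type*} [mΩ : MeasurableSpace Ω] (P : Measure Ω) [IsProbabilityMeasure P]
    (ℱ : Filtration ℕ mΩ)
    (g m v vhat x : ℕ → Ω → (Fin n → ℝ))
    (hgmeas : ∀ k, Measurable (g k))
    (hxmeas : ∀ k, Measurable[ℱ k] (x k))
    (hm0 : ∀ ω i, m 0 ω i = 0) (hv0 : ∀ ω i, v 0 ω i = 0) (hvhat0 : ∀ ω i, vhat 0 ω i = 0)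
    (hm : ∀ k ω i, m (k+1) ω i = β₁ * m k ω i + (1 - β₁) * g (k+1) ω i)
    (hv : ∀ k ω i, v (k+1) ω i = β₂ * v k ω i + (1 - β₂) * (g (k+1) ω i)^2)
    (hvhat : ∀ k ω i, vhat (k+1) ω i = max (vhat k ω i) (v (k+1) ω i))
    (X : Set (Fin n → ℝ)) (hXne : X.Nonempty) (hXcpt : IsCompact X) (hXcvx : Convex ℝ X)
    (Dinf Ginf G₁ : ℝ)
    (hD : ∀ p ∈ X, ∀ q ∈ X, ∀ i, |p i - q i| ≤ Dinf)
    (hGinf : ∀ k, 1 ≤ k → ∀ᵐ ω ∂P, ∀ i, |g k ω i| ≤ Ginf)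
    (hG1 : ∀ k, 1 ≤ k → ∫ ω, (∑ i, |g k ω i|) ∂P ≤ G₁)
    (F : (Fin n → ℝ) → ℝ) (hF : ConvexOn ℝ Set.univ F)
    (Fstar : ℝ) (hFstar : IsLeast (F '' X) Fstar)
    (K : ℕ) (hK : 1 ≤ K) (α : ℝ) (hα : 0 < α)
    (αseq : ℕ → ℝ) (hαseq : ∀ k, 1 ≤ k → αseq k = α / Real.sqrt k)
    (hxX : ∀ᵐ ω ∂P, ∀ k, 1 ≤ k → x k ω ∈ X)
    (hopt : ∀ᵐ ω ∂P, ∀ k, 1 ≤ k → ∀ y ∈ X,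
      (∑ i, (x (k+1) ω i - y i) *
        (Real.sqrt (vhat k ω i) * (x (k+1) ω i - x k ω i) + αseq k * m k ω i)) ≤ 0)
    (hsub : ∀ k, 1 ≤ k → ∀ᵐ ω ∂P, ∀ y ∈ X,
      F y ≥ F (x k ω) + ∑ i, (P[(fun ω' => g k ω' i)|ℱ k]) ω * (y i - x k ω i)) :
    (∫ ω, F (fun i =>
        (∑ k ∈ Finset.Icc 1 K,
            (∑ j ∈ Finset.Icc k K, αseq j * β₁ ^ (j - k)) * x k ω i) /
        (∑ k ∈ Finset.Icc 1 K, ∑ j ∈ Finset.Icc k K, αseq j * β₁ ^ (j - k))) ∂P) - Fstar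
      ≤ (n * Dinf^2 * Ginf + (α^2 * (1 + Real.log K) / (1 - β₁)^2) * (G₁ / Real.sqrt (1 - β₂)))
          / (4 * α * (Real.sqrt (K + 1) - 1) * (1 - β₁)) := by
  obtain ⟨⟨y, hyX, rfl⟩, -⟩ := hFstar
  have hsqrt : 1 < √((K : ℝ) + 1) := Real.lt_sqrt_of_sq_lt (by norm_num; omega)
  convert stmt1_general hβ₁ hβ₂ hgmeas hxmeas hm0 hv0 hvhat0 hm hv hvhat
    (hxX.mono fun ω hω k hk i ↦ hD _ (hω k hk) y hyX i) hGinf hG1 hF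
    (fun k hk ↦ hαseq k hk ▸ div_nonneg hα.le (Real.sqrt_nonneg _))
    (hopt.mono fun ω hω k hk ↦ hω k hk y hyX) (fun k hk ↦ (hsub k hk).mono fun ω hω ↦ hω y hyX)
    (mul_pos (mul_pos two_pos hα) (sub_pos.2 hsqrt)) (le_sum_of_eq_div_sqrt hα.le hαseq K)
    (sum_sq_le_of_eq_div_sqrt hαseq K) using 2
  · rfl
  · rw [Fintype.card_fin]
  · ring
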